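/- arXiv:math/0311449 — 5 statements merged into one kernel-verified Lean document; each statement's English description precedes it below -/
import Mathlib

section
/- Let k ≥ 3 be an integer, let t = 2k-1 and r = C(k,2) - 1. Let G be a graph, let F be a family of pairwise edge-disjoint copies of K_t in G, and let A be the set of edges of G not contained in any member of F. Suppose that to each e ∈ A one can associate an r-element subset S(e) of F such that (i) S(e) ∩ S(e') = ∅ whenever e ≠ e' are edges of A, and (ii) one can choose one edge f_H from each member H of S(e) so that the r chosen edges together with e form the edge set of a copy of K_k in G. Then G has an F_k-decomposition, where F_k = {K_k, K_{2k-1}, K_{2k-1}⁻}. -/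
/-- `c` is a copy of `H` in `G`, i.e. a subgraph of `G` isomorphic to `H`. -/
def SimpleGraph.Subgraph.IsCopy {α β : Type*} {G : SimpleGraph α} (c : G.Subgraph)
    (H : SimpleGraph β) : Prop :=
  Nonempty (c.coe ≃g H)

theorem exists_perm_two {α : Type*} [DecidableEq α] (i j p q : α) (hij : i ≠ j) (hpq : p ≠ q) :
    ∃ σ : Equiv.Perm α, σ i = p ∧ σ j = q := by
  refine ⟨(Equiv.swap i p).trans (Equiv.swap (Equiv.swap i p j) q), ?_, ?_⟩
  · have h : Equiv.swap i p j ≠ p := by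
      intro h
      have h2 : Equiv.swap i p j = Equiv.swap i p i := by rw [h, Equiv.swap_apply_left]
      exact hij ((Equiv.swap i p).injective h2).symm
    simp only [Equiv.trans_apply, Equiv.swap_apply_left]
    exact Equiv.swap_apply_of_ne_of_ne h.symm hpq
  · simp

theorem isCopy_deleteEdge {V : Type*} {G : SimpleGraph V} {n : ℕ} (c : G.Subgraph)
    (hc : c.IsCopy (⊤ : SimpleGraph (Fin n))) (x : Sym2 V) (hx : x ∈ c.edgeSet)
    (p q : Fin n) (hpq : p ≠ q) :
    (c.deleteEdges {x}).IsCopy ((⊤ : SimpleGraph (Fin n)).deleteEdges {s(p, q)}) := by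
  obtain ⟨φ⟩ := hc
  induction x with
  | _ a b =>
  have hab : c.Adj a b := hx
  have ha := hab.fst_mem
  have hb := hab.snd_mem
  have hne : φ ⟨a, ha⟩ ≠ φ ⟨b, hb⟩ := by
    intro h
    have := φ.injective h
    exact hab.ne (congrArg Subtype.val this)
  obtain ⟨σ, h1, h2⟩ := exists_perm_two _ _ p q hne hpq
  refine ⟨⟨φ.toEquiv.trans σ, ?_⟩⟩
  rintro ⟨u, hu⟩ ⟨v, hv⟩
  have hu' : u ∈ c.verts := hu
  have hv' : v ∈ c.verts := hv
  have key : ∀ (w : c.verts) (a : V) (ha : a ∈ c.verts) (p : Fin n), σ (φ ⟨a, ha⟩) = p →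
      (σ (φ w) = p ↔ (w : V) = a) := by
    rintro w a ha p rfl
    rw [σ.injective.eq_iff, φ.injective.eq_iff, Subtype.ext_iff]
  have hadj : (σ (φ ⟨u, hu'⟩) ≠ σ (φ ⟨v, hv'⟩)) ↔ c.Adj u v := by
    have := φ.map_rel_iff (a := ⟨u, hu'⟩) (b := ⟨v, hv'⟩)
    rw [ne_eq, σ.injective.eq_iff]
    simpa using this
  have e1 := key ⟨u, hu'⟩ a ha p h1
  have e2 := key ⟨u, hu'⟩ b hb q h2
  have e3 := key ⟨v, hv'⟩ a ha p h1
  have e4 := key ⟨v, hv'⟩ b hb q h2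
  change ((⊤ : SimpleGraph (Fin n)).deleteEdges {s(p, q)}).Adj (σ (φ ⟨u, hu'⟩)) (σ (φ ⟨v, hv'⟩)) ↔
    (c.deleteEdges {s(a, b)}).Adj u v
  rw [SimpleGraph.deleteEdges_adj, SimpleGraph.Subgraph.deleteEdges_adj, SimpleGraph.top_adj,
    hadj]
  simp only [Set.mem_singleton_iff, Sym2.eq_iff, e1, e2, e3, e4]

/-- Let `k ≥ 3`, `t = 2k-1`, `r = C(k,2)-1`. Let `G` be a graph, `F` a family of pairwise
edge-disjoint copies of `K_t` in `G`, and `A` the set of edges of `G` not contained in any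
member of `F`. Suppose each `e ∈ A` has an `r`-element subset `S e` of `F` such that the
`S e` are pairwise disjoint, and one can pick one edge from each member of `S e` so that these
`r` edges together with `e` form the edge set of a copy of `K_k` in `G`. Then `G` has an
`F_k`-decomposition, where `F_k = {K_k, K_{2k-1}, K_{2k-1}⁻}`. -/
theorem Fk_decomposition_of_good_assignment {V : Type*} [Fintype V]
    (k : ℕ) (hk : 3 ≤ k) (G : SimpleGraph V)
    (F : Set G.Subgraph)
    (hF : ∀ c ∈ F, c.IsCopy (⊤ : SimpleGraph (Fin (2 * k - 1))))
    (hFdisj : F.Pairwise fun c d => Disjoint c.edgeSet d.edgeSet)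
    (A : Set (Sym2 V)) (hA : A = {e ∈ G.edgeSet | ∀ c ∈ F, e ∉ c.edgeSet})
    (S : Sym2 V → Finset G.Subgraph)
    (hSsub : ∀ e ∈ A, (S e : Set G.Subgraph) ⊆ F)
    (hScard : ∀ e ∈ A, (S e).card = k * (k - 1) / 2 - 1)
    (hSdisj : ∀ e ∈ A, ∀ e' ∈ A, e ≠ e' → Disjoint (S e) (S e'))
    (hSgood : ∀ e ∈ A, ∃ f : G.Subgraph → Sym2 V,
      (∀ c ∈ S e, f c ∈ c.edgeSet) ∧
      ∃ c : G.Subgraph, c.IsCopy (⊤ : SimpleGraph (Fin k)) ∧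
        c.edgeSet = insert e (f '' (S e : Set G.Subgraph))) :
    ∃ L : Set G.Subgraph,
      (∀ c ∈ L, c.IsCopy (⊤ : SimpleGraph (Fin k)) ∨
        c.IsCopy (⊤ : SimpleGraph (Fin (2 * k - 1))) ∨
        c.IsCopy ((⊤ : SimpleGraph (Fin (2 * k - 1))).deleteEdges
          {s((⟨0, by omega⟩ : Fin (2 * k - 1)), (⟨1, by omega⟩ : Fin (2 * k - 1)))})) ∧
      ∀ e ∈ G.edgeSet, ∃! c, c ∈ L ∧ e ∈ c.edgeSet := by
  classical
  choose! f hf C hC hCe using hSgood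
  have hAF : ∀ e ∈ A, ∀ c ∈ F, e ∉ c.edgeSet := by
    intro e he
    rw [hA] at he
    exact he.2
  have huniq : ∀ c ∈ F, ∀ d ∈ F, ∀ x, x ∈ c.edgeSet → x ∈ d.edgeSet → c = d := by
    intro c hc d hd x hxc hxd
    by_contra h
    exact Set.disjoint_left.1 (hFdisj hc hd h) hxc hxd
  have hSuniq : ∀ e ∈ A, ∀ e' ∈ A, ∀ c, c ∈ S e → c ∈ S e' → e = e' := by
    intro e he e' he' c h1 h2
    by_contra h
    exact Finset.disjoint_left.1 (hSdisj e he e' he' h) h1 h2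
  let M : G.Subgraph → Set (Sym2 V) := fun c => {x | ∃ e ∈ A, c ∈ S e ∧ x = f e c}
  let D : G.Subgraph → G.Subgraph := fun c => c.deleteEdges (M c)
  have hD : ∀ c x, x ∈ (D c).edgeSet ↔ x ∈ c.edgeSet ∧ x ∉ M c := by
    intro c x
    induction x with
    | _ a b => exact SimpleGraph.Subgraph.deleteEdges_adj _ _ _
  have hCmem : ∀ e ∈ A, ∀ x, x ∈ (C e).edgeSet ↔ x = e ∨ ∃ c ∈ S e, f e c = x := by
    intro e he x
    rw [hCe e he]
    simp
  have hCF : ∀ e ∈ A, ∀ c ∈ F, ∀ x, x ∈ (C e).edgeSet → x ∈ c.edgeSet →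
      c ∈ S e ∧ x = f e c := by
    intro e he c hc x hx hxc
    rcases (hCmem e he x).1 hx with rfl | ⟨d, hd, rfl⟩
    · exact absurd hxc (hAF _ he c hc)
    · have := huniq c hc d (hSsub e he hd) _ hxc (hf e he d hd)
      subst this
      exact ⟨hd, rfl⟩
  have hCC : ∀ e ∈ A, ∀ e' ∈ A, ∀ x, x ∈ (C e).edgeSet → x ∈ (C e').edgeSet → e = e' := by
    intro e he e' he' x hx hx'
    rcases (hCmem e he x).1 hx with rfl | ⟨d, hd, rfl⟩
    · rcases (hCmem e' he' x).1 hx' with rfl | ⟨d, hd, rfl⟩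
      · rfl
      · exact absurd (hf e' he' d hd) (hAF _ he d (hSsub e' he' hd))
    · exact hSuniq e he e' he' d hd
        (hCF e' he' d (hSsub e he hd) _ hx' (hf e he d hd)).1
  have hCD : ∀ e ∈ A, ∀ c ∈ F, ∀ x, x ∈ (C e).edgeSet → x ∉ (D c).edgeSet := by
    intro e he c hc x hx hxD
    obtain ⟨h1, h2⟩ := (hD c x).1 hxD
    obtain ⟨h3, h4⟩ := hCF e he c hc x hx h1
    exact h2 ⟨e, he, h3, h4⟩
  refine ⟨C '' A ∪ D '' F, ?_, ?_⟩
  · rintro _ (⟨e, he, rfl⟩ | ⟨c, hc, rfl⟩)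
    · exact Or.inl (hC e he)
    · right
      by_cases h : ∃ e ∈ A, c ∈ S e
      · right
        obtain ⟨e, he, hce⟩ := h
        have hM : M c = {f e c} := by
          ext x
          constructor
          · rintro ⟨e', he', hce', rfl⟩
            rw [hSuniq e he e' he' c hce hce']
            rfl
          · rintro rfl
            exact ⟨e, he, hce, rfl⟩
        change (c.deleteEdges (M c)).IsCopy _
        rw [hM]
        refine isCopy_deleteEdge c (hF c hc) _ (hf e he c hce) _ _ ?_
        simp
      · left
        have hM : M c = ∅ := by
          ext x
          constructor
          · rintro ⟨e', he', hce', rfl⟩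
            exact h ⟨e', he', hce'⟩
          · exact fun h => h.elim
        change (c.deleteEdges (M c)).IsCopy _
        rw [hM, SimpleGraph.Subgraph.deleteEdges_empty_eq]
        exact hF c hc
  · intro x hx
    apply existsUnique_of_exists_of_unique
    · by_cases hxA : x ∈ A
      · exact ⟨C x, Or.inl ⟨x, hxA, rfl⟩, (hCmem x hxA x).2 (Or.inl rfl)⟩
      · have : ∃ c ∈ F, x ∈ c.edgeSet := by
          by_contra h
          push Not at h
          apply hxA
          rw [hA]
          exact ⟨hx, h⟩
        obtain ⟨c, hc, hxc⟩ := this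
        by_cases hxM : x ∈ M c
        · obtain ⟨e, he, hce, rfl⟩ := hxM
          exact ⟨C e, Or.inl ⟨e, he, rfl⟩, (hCmem e he _).2 (Or.inr ⟨c, hce, rfl⟩)⟩
        · exact ⟨D c, Or.inr ⟨c, hc, rfl⟩, (hD c x).2 ⟨hxc, hxM⟩⟩
    · rintro _ _ ⟨⟨e, he, rfl⟩ | ⟨c, hc, rfl⟩, h1⟩ ⟨⟨e', he', rfl⟩ | ⟨c', hc', rfl⟩, h2⟩
      · rw [hCC e he e' he' x h1 h2]
      · exact absurd h2 (hCD e he c' hc' x h1)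
      · exact absurd h1 (hCD e' he' c hc x h2)
      · rw [huniq c hc c' hc' x ((hD c x).1 h1).1 ((hD c' x).1 h2).1]
end

section
/- Let t ≥ 2 be an integer and let 0 ≤ γ with 1 - tγ ≥ 0. If G* is a graph with n* vertices and minimum degree at least n*(1-γ), then for every edge e of G*, the number of t-element vertex subsets of G* containing both endpoints of e whose induced subgraph is a complete graph K_t is at least C(n*-2, t-2)·(1-tγ)^{t-2}; equivalently, at most (1 - (1-tγ)^{t-2})·C(n*-2, t-2) of the t-element subsets containing both endpoints of e induce a non-complete subgraph. -/
open Classical in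
/-- The `k`-cliques through `u` and `v`. -/
noncomputable def cliqueFam {V : Type*} [Fintype V] (G : SimpleGraph V) (u v : V) (k : ℕ) :
    Finset (Finset V) :=
  Finset.univ.filter fun T => T.card = k ∧ u ∈ T ∧ v ∈ T ∧ G.IsClique (T : Set V)

open Classical in
lemma common_nbrs {V : Type*} [Fintype V] (γ : ℝ) (G : SimpleGraph V)
    (hδ : ∀ v, (Fintype.card V : ℝ) * (1 - γ) ≤ ((G.neighborSet v).ncard : ℝ))
    (S : Finset V) :
    (Fintype.card V : ℝ) * (1 - S.card * γ) ≤
      ((Finset.univ.filter fun w => ∀ s ∈ S, G.Adj s w).card : ℝ) := by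
  induction S using Finset.induction_on with
  | empty => simp
  | insert a S ha ih =>
    have h1 := hδ a
    have h2 : (G.neighborSet a).ncard = (Finset.univ.filter fun w => G.Adj a w).card := by
      rw [← Set.ncard_coe_finset]
      congr 1
      ext w
      simp
    rw [h2] at h1
    have h3 : (Finset.univ.filter fun w => ∀ s ∈ insert a S, G.Adj s w) =
        (Finset.univ.filter fun w => G.Adj a w) ∩
          (Finset.univ.filter fun w => ∀ s ∈ S, G.Adj s w) := by
      ext w
      simp
    have h4 := Finset.card_union_add_card_inter (Finset.univ.filter fun w => G.Adj a w)
          (Finset.univ.filter fun w => ∀ s ∈ S, G.Adj s w)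
    have h5 := Finset.card_le_univ ((Finset.univ.filter fun w => G.Adj a w) ∪
          (Finset.univ.filter fun w => ∀ s ∈ S, G.Adj s w))
    rw [h3, Finset.card_insert_of_notMem ha]
    have h4' := congrArg (Nat.cast (R := ℝ)) h4
    have h5' := (Nat.cast_le (α := ℝ)).2 h5
    push_cast at h4' h5' ⊢
    linarith

open Classical in
lemma clique_step {V : Type*} [Fintype V] (t : ℕ)
    (γ : ℝ) (hγ : 0 ≤ γ) (hγt : 0 ≤ 1 - (t : ℝ) * γ) (G : SimpleGraph V)
    (hδ : ∀ v, (Fintype.card V : ℝ) * (1 - γ) ≤ ((G.neighborSet v).ncard : ℝ))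
    (u v : V) (huv : G.Adj u v) (j : ℕ) (hj : j + 2 ≤ t) :
    ((cliqueFam G u v (j + 2)).card : ℝ) *
        (((Fintype.card V - 2 - j : ℕ) : ℝ) * (1 - t * γ)) ≤
      ((cliqueFam G u v (j + 3)).card : ℝ) * (j + 1) := by
  have key := Finset.sum_card_bipartiteAbove_eq_sum_card_bipartiteBelow
    (s := cliqueFam G u v (j + 2)) (t := cliqueFam G u v (j + 3)) (fun S T => S ⊆ T)
  have key' := congrArg (Nat.cast (R := ℝ)) key
  push_cast at key'
  have hA : ∀ S ∈ cliqueFam G u v (j + 2),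
      (((Fintype.card V - 2 - j : ℕ) : ℝ) * (1 - t * γ)) ≤
      ((Finset.bipartiteAbove (fun S T => S ⊆ T) (cliqueFam G u v (j + 3)) S).card : ℝ) := by
    intro S hS
    simp only [cliqueFam, Finset.mem_filter, Finset.mem_univ, true_and] at hS
    obtain ⟨hc, hu, hv, hcl⟩ := hS
    have h1 := common_nbrs γ G hδ S
    have h2 : (Finset.univ.filter fun w => ∀ s ∈ S, G.Adj s w).card ≤
        (Finset.bipartiteAbove (fun S T => S ⊆ T) (cliqueFam G u v (j + 3)) S).card := by
      have hn : ∀ w, (∀ s ∈ S, G.Adj s w) → w ∉ S := fun w hw hwS => G.irrefl (hw w hwS)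
      apply Finset.card_le_card_of_injOn (fun w => insert w S)
      · intro w hw
        simp only [Finset.coe_filter, Finset.mem_univ, true_and, Set.mem_setOf_eq] at hw
        simp only [Finset.mem_coe, Finset.mem_bipartiteAbove, cliqueFam, Finset.mem_filter,
          Finset.mem_univ, true_and]
        refine ⟨⟨?_, by simp [hu], by simp [hv], ?_⟩, Finset.subset_insert _ _⟩
        · rw [Finset.card_insert_of_notMem (hn w hw), hc]
        · rw [Finset.coe_insert, SimpleGraph.isClique_insert]
          exact ⟨hcl, fun b hb _ => (hw b hb).symm⟩
      · intro w hw w' hw' h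
        simp only [Finset.coe_filter, Finset.mem_univ, true_and, Set.mem_setOf_eq] at hw hw'
        have h3 : w ∈ insert w' S := by
          have : w ∈ insert w S := Finset.mem_insert_self _ _
          exact (show insert w S = insert w' S from h) ▸ this
        rcases Finset.mem_insert.1 h3 with h3 | h3
        · exact h3
        · exact absurd h3 (hn w hw)
    have h2' := (Nat.cast_le (α := ℝ)).2 h2
    refine le_trans ?_ (h1.trans h2')
    rw [hc]
    apply mul_le_mul _ _ hγt (by positivity)
    · exact_mod_cast (by omega : Fintype.card V - 2 - j ≤ Fintype.card V)
    · have : ((j + 2 : ℕ) : ℝ) ≤ t := by exact_mod_cast hj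
      nlinarith
  have hB : ∀ T ∈ cliqueFam G u v (j + 3),
      ((Finset.bipartiteBelow (fun S T => S ⊆ T) (cliqueFam G u v (j + 2)) T).card : ℝ)
        ≤ (j : ℝ) + 1 := by
    intro T hT
    simp only [cliqueFam, Finset.mem_filter, Finset.mem_univ, true_and] at hT
    obtain ⟨hc, hu, hv, hcl⟩ := hT
    have h1 : Finset.bipartiteBelow (fun S T => S ⊆ T) (cliqueFam G u v (j + 2)) T ⊆
        (T \ {u, v}).image (fun w => T.erase w) := by
      intro S hS
      simp only [Finset.mem_bipartiteBelow, cliqueFam, Finset.mem_filter,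
          Finset.mem_univ, true_and] at hS
      obtain ⟨⟨hSc, hSu, hSv, -⟩, hST⟩ := hS
      have h2 : (T \ S).card = 1 := by
        rw [Finset.card_sdiff_of_subset hST]; omega
      obtain ⟨w, hw⟩ := Finset.card_eq_one.1 h2
      have hwT : w ∈ T \ S := by rw [hw]; simp
      rw [Finset.mem_sdiff] at hwT
      refine Finset.mem_image.2 ⟨w, ?_, ?_⟩
      · simp only [Finset.mem_sdiff, Finset.mem_insert, Finset.mem_singleton, not_or]
        exact ⟨hwT.1, fun h => hwT.2 (h ▸ hSu), fun h => hwT.2 (h ▸ hSv)⟩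
      · symm
        apply Finset.eq_of_subset_of_card_le
        · intro x hx
          exact Finset.mem_erase.2 ⟨fun h => hwT.2 (h ▸ hx), hST hx⟩
        · rw [Finset.card_erase_of_mem hwT.1]; omega
    have h3 : (T \ {u, v}).card = j + 1 := by
      rw [Finset.card_sdiff_of_subset, Finset.card_pair huv.ne]
      · omega
      · intro x hx
        simp only [Finset.mem_insert, Finset.mem_singleton] at hx
        rcases hx with rfl | rfl <;> assumption
    have h4 := (Finset.card_le_card h1).trans Finset.card_image_le
    rw [h3] at h4
    exact_mod_cast h4
  have hA' := Finset.sum_le_sum hA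
  have hB' := Finset.sum_le_sum hB
  simp only [Finset.sum_const, nsmul_eq_mul] at hA' hB'
  linarith

open Classical in
lemma clique_count {V : Type*} [Fintype V] (t : ℕ)
    (γ : ℝ) (hγ : 0 ≤ γ) (hγt : 0 ≤ 1 - (t : ℝ) * γ) (G : SimpleGraph V)
    (hδ : ∀ v, (Fintype.card V : ℝ) * (1 - γ) ≤ ((G.neighborSet v).ncard : ℝ))
    (u v : V) (huv : G.Adj u v) (j : ℕ) (hj : j + 2 ≤ t) :
    ((Fintype.card V - 2).choose j : ℝ) * (1 - (t : ℝ) * γ) ^ j ≤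
      ((cliqueFam G u v (j + 2)).card : ℝ) := by
  induction j with
  | zero =>
    have : 0 < (cliqueFam G u v (0 + 2)).card := by
      apply Finset.card_pos.2
      refine ⟨{u, v}, ?_⟩
      simp only [cliqueFam, Finset.mem_filter, Finset.mem_univ, true_and]
      refine ⟨Finset.card_pair huv.ne, by simp, by simp, ?_⟩
      rw [Finset.coe_pair, SimpleGraph.isClique_pair]
      exact fun _ => huv
    simp only [Nat.choose_zero_right, pow_zero, Nat.cast_one, mul_one]
    exact_mod_cast this
  | succ j ih =>
    have ih := ih (by omega)
    have hs := clique_step t γ hγ hγt G hδ u v huv j (by omega)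
    have hc := congrArg (Nat.cast (R := ℝ)) (Nat.choose_succ_right_eq (Fintype.card V - 2) j)
    rw [Nat.cast_mul, Nat.cast_mul] at hc
    have h0 : (0 : ℝ) < (j : ℝ) + 1 := by positivity
    refine le_of_mul_le_mul_right (le_trans (le_of_eq ?_)
      ((mul_le_mul_of_nonneg_right ih
        (mul_nonneg (Nat.cast_nonneg (Fintype.card V - 2 - j)) hγt)).trans hs)) h0
    push_cast at hc ⊢
    rw [pow_succ]
    linear_combination ((1 - (t : ℝ) * γ) ^ j * (1 - t * γ)) * hc

/-- Let `t ≥ 2` and `0 ≤ γ` with `1 - tγ ≥ 0`. If `G*` is a graph with `n*` vertices and minimum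
degree at least `n*(1-γ)`, then for every edge of `G*`, at least `C(n*-2,t-2)·(1-tγ)^(t-2)` of
the `t`-element vertex subsets containing both endpoints induce a complete graph `K_t`;
equivalently, at most `(1-(1-tγ)^(t-2))·C(n*-2,t-2)` of them induce a non-complete subgraph. -/
theorem random_subset_is_clique {V : Type*} [Fintype V] (t : ℕ) (ht : 2 ≤ t)
    (γ : ℝ) (hγ : 0 ≤ γ) (hγt : 0 ≤ 1 - (t : ℝ) * γ) (G : SimpleGraph V)
    (hδ : ∀ v, (Fintype.card V : ℝ) * (1 - γ) ≤ ((G.neighborSet v).ncard : ℝ))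
    (u v : V) (huv : G.Adj u v) :
    ((Fintype.card V - 2).choose (t - 2) : ℝ) * (1 - (t : ℝ) * γ) ^ (t - 2) ≤
      ({T : Finset V | T.card = t ∧ u ∈ T ∧ v ∈ T ∧ G.IsClique (T : Set V)}.ncard : ℝ) ∧
    ({T : Finset V | T.card = t ∧ u ∈ T ∧ v ∈ T ∧ ¬ G.IsClique (T : Set V)}.ncard : ℝ) ≤
      (1 - (1 - (t : ℝ) * γ) ^ (t - 2)) * ((Fintype.card V - 2).choose (t - 2) : ℝ) := by
  classical
  obtain ⟨j, rfl⟩ : ∃ j, t = j + 2 := ⟨t - 2, by omega⟩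
  have h1 := clique_count (j + 2) γ hγ hγt G hδ u v huv j le_rfl
  have e1 : {T : Finset V | T.card = j + 2 ∧ u ∈ T ∧ v ∈ T ∧ G.IsClique (T : Set V)}.ncard =
      (cliqueFam G u v (j + 2)).card := by
    rw [← Set.ncard_coe_finset]
    congr 1
    ext T
    simp [cliqueFam]
  have e2 : {T : Finset V | T.card = j + 2 ∧ u ∈ T ∧ v ∈ T ∧ ¬ G.IsClique (T : Set V)}.ncard =
      (Finset.univ.filter fun T : Finset V =>
        T.card = j + 2 ∧ u ∈ T ∧ v ∈ T ∧ ¬ G.IsClique (T : Set V)).card := by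
    rw [← Set.ncard_coe_finset]
    congr 1
    ext T
    simp
  have hsum : (cliqueFam G u v (j + 2)).card + (Finset.univ.filter fun T : Finset V =>
        T.card = j + 2 ∧ u ∈ T ∧ v ∈ T ∧ ¬ G.IsClique (T : Set V)).card ≤
      (Fintype.card V - 2).choose j := by
    rw [← Finset.card_union_of_disjoint]
    · have hp : ((Finset.univ \ {u, v} : Finset V).powersetCard j).card =
          (Fintype.card V - 2).choose j := by
        rw [Finset.card_powersetCard, Finset.card_sdiff_of_subset (Finset.subset_univ _),
          Finset.card_pair huv.ne, Finset.card_univ]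
      rw [← hp]
      have hsub : ∀ T : Finset V, u ∈ T → v ∈ T → ({u, v} : Finset V) ⊆ T := by
        intro T hu hv x hx
        simp only [Finset.mem_insert, Finset.mem_singleton] at hx
        rcases hx with rfl | rfl <;> assumption
      have hmem : ∀ T : Finset V, T ∈ cliqueFam G u v (j + 2) ∪ (Finset.univ.filter
          fun T : Finset V => T.card = j + 2 ∧ u ∈ T ∧ v ∈ T ∧ ¬ G.IsClique (T : Set V)) →
          T.card = j + 2 ∧ u ∈ T ∧ v ∈ T := by
        intro T hT
        simp only [cliqueFam, Finset.mem_union, Finset.mem_filter, Finset.mem_univ,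
          true_and] at hT
        tauto
      apply Finset.card_le_card_of_injOn (fun T => T \ {u, v})
      · intro T hT
        obtain ⟨hc, hu, hv⟩ := hmem T hT
        simp only [Finset.mem_coe, Finset.mem_powersetCard]
        refine ⟨Finset.sdiff_subset_sdiff (Finset.subset_univ _) le_rfl, ?_⟩
        rw [Finset.card_sdiff_of_subset (hsub T hu hv), Finset.card_pair huv.ne]
        omega
      · intro T hT T' hT' h
        obtain ⟨hc, hu, hv⟩ := hmem T hT
        obtain ⟨hc', hu', hv'⟩ := hmem T' hT'
        have h : T \ {u, v} = T' \ {u, v} := h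
        rw [← Finset.sdiff_union_of_subset (hsub T hu hv), h,
          Finset.sdiff_union_of_subset (hsub T' hu' hv')]
    · rw [Finset.disjoint_left]
      intro T hT hT'
      simp only [cliqueFam, Finset.mem_filter, Finset.mem_univ, true_and] at hT hT'
      exact hT'.2.2.2 hT.2.2.2
  have hsum' := (Nat.cast_le (α := ℝ)).2 hsum
  rw [Nat.cast_add] at hsum'
  rw [e1, e2, Nat.add_sub_cancel]
  exact ⟨h1, by linarith⟩
end

section
/- Let k ≥ 3 be an integer and t = 2k-1. There exists n₀ such that for every n ≥ n₀ with n ≡ 1 (mod t(t-1)), every t-design D on [n], and every graph G on vertex set {1,…,n} with minimum degree at least n·(1 - 1/(9k¹⁰)), there exists a permutation π of {1,…,n} with the following property: letting A_π be the set of edges of G that lie inside some block π(S) = {π(j) : j ∈ S}, S ∈ D, whose induced subgraph G[π(S)] is not a complete graph K_t, the graph on {1,…,n} with edge set A_π has maximum degree at most 6n/k⁷. -/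
open Finset in
theorem aux_swap_count {V : Type*} [Fintype V] [DecidableEq V] (G : SimpleGraph V)
    [DecidableRel G.Adj] (d : ℕ) (hd : ∀ v, (univ.filter fun w => ¬ G.Adj v w).card ≤ d)
    (F F' : Finset (Equiv.Perm V)) (a b : V) (hab : a ≠ b) (C : Finset V) (haC : a ∉ C)
    (h1 : ∀ π ∈ F, ∀ c ∈ C, π * Equiv.swap b c ∈ F')
    (h2 : ∀ π ∈ F, ¬ G.Adj (π a) (π b)) :
    F.card * C.card ≤ F'.card * d := by
  have hle : (F ×ˢ C).card ≤
      (F'.sigma (fun π' => univ.filter fun c => ¬ G.Adj (π' a) (π' c))).card := by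
    apply card_le_card_of_injOn (fun x => (⟨x.1 * Equiv.swap b x.2, x.2⟩ : (_ : Equiv.Perm V) × V))
    · rintro ⟨π, c⟩ hx
      simp only [coe_product, Set.mem_prod, mem_coe] at hx
      obtain ⟨hπ, hc⟩ := hx
      have hac : a ≠ c := fun h => haC (h ▸ hc)
      simp only [coe_sigma, Set.mem_sigma_iff, mem_coe, mem_filter, mem_univ, true_and]
      refine ⟨h1 π hπ c hc, ?_⟩
      simp only [Equiv.Perm.mul_apply, Equiv.swap_apply_right,
        Equiv.swap_apply_of_ne_of_ne hab hac]
      exact h2 π hπ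
    · rintro ⟨π, c⟩ _ ⟨π', c'⟩ _ h
      simp only [Sigma.mk.injEq, heq_eq_eq] at h
      obtain ⟨h, rfl⟩ := h
      have := mul_right_cancel h
      rw [this]
  rw [card_product, card_sigma] at hle
  refine hle.trans ?_
  rw [← smul_eq_mul]
  apply sum_le_card_nsmul
  intro π' _
  refine le_trans ?_ (hd (π' a))
  apply card_le_card_of_injOn (fun c => π' c)
  · intro c hc
    simpa using hc
  · exact π'.injective.injOn

/-- The block `S` has a non-adjacent pair of images away from `p`. -/
def AuxBad {V : Type*} (G : SimpleGraph V) (p : V) (π : Equiv.Perm V) (S : Finset V) : Prop :=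
  ∃ a ∈ S, ∃ b ∈ S, a ≠ p ∧ b ≠ p ∧ a ≠ b ∧ ¬ G.Adj (π a) (π b)

open Finset Classical in
theorem aux_block_count {V : Type*} [Fintype V] (G : SimpleGraph V)
    (d : ℕ) (hd : ∀ v, (univ.filter fun w => ¬ G.Adj v w).card ≤ d)
    (p : V) (s J N : ℕ) (hN : N + 1 + J * (s + 1) ≤ Fintype.card V)
    (T : Finset (Finset V)) (hT : ∀ S ∈ T, p ∈ S ∧ S.card = s + 1)
    (hdis : ∀ S ∈ T, ∀ S' ∈ T, ∀ x, x ≠ p → x ∈ S → x ∈ S' → S = S')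
    (hJ : T.card ≤ J) :
    (univ.filter fun π : Equiv.Perm V => ∀ S ∈ T, AuxBad G p π S).card * N ^ T.card ≤
      (Fintype.card V).factorial * (s ^ 2 * d) ^ T.card := by
  induction T using Finset.induction_on with
  | empty => simp [Fintype.card_perm]
  | insert S T hST ih =>
    have ih' := ih (fun S' h => hT S' (mem_insert_of_mem h))
      (fun S1 h1 S2 h2 => hdis S1 (mem_insert_of_mem h1) S2 (mem_insert_of_mem h2))
      ((card_le_card (subset_insert S T)).trans hJ)
    rw [card_insert_of_notMem hST] at hJ ⊢
    set BT := univ.filter fun π : Equiv.Perm V => ∀ S ∈ T, AuxBad G p π S with hBT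
    set BI := univ.filter fun π : Equiv.Perm V => ∀ S' ∈ insert S T, AuxBad G p π S' with hBI
    have hScard : (S.erase p).card = s := by
      rw [card_erase_of_mem (hT S (mem_insert_self _ _)).1, (hT S (mem_insert_self _ _)).2]; rfl
    let F : V × V → Finset (Equiv.Perm V) := fun x => BI.filter fun π =>
      x.1 ≠ x.2 ∧ ¬ G.Adj (π x.1) (π x.2)
    have hsub : BI ⊆ (S.erase p ×ˢ S.erase p).biUnion F := by
      intro π hπ
      have h := (mem_filter.1 hπ).2 S (mem_insert_self _ _)
      obtain ⟨a, ha, b, hb, hap, hbp, hab, hadj⟩ := h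
      rw [mem_biUnion]
      exact ⟨(a, b), by simp [ha, hb, hap, hbp], mem_filter.2 ⟨hπ, hab, hadj⟩⟩
    have hF : ∀ x ∈ S.erase p ×ˢ S.erase p, (F x).card * N ≤ BT.card * d := by
      rintro ⟨a, b⟩ hx
      simp only [mem_product, mem_erase] at hx
      obtain ⟨⟨hap, haS⟩, hbp, hbS⟩ := hx
      by_cases hab : a = b
      · have : F (a, b) = ∅ := by simp [F, hab]
        simp [this]
      set U := T.biUnion id with hU
      have hUc : U.card ≤ T.card * (s + 1) :=
        card_biUnion_le_card_mul _ _ _ (fun S' h => (hT S' (mem_insert_of_mem h)).2.le)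
      have hC : N ≤ ((insert a U)ᶜ).card := by
        rw [card_compl]
        have h1 := card_insert_le a U
        have h2 : (T.card) * (s + 1) ≤ J * (s + 1) := Nat.mul_le_mul_right _ (by omega)
        omega
      refine (Nat.mul_le_mul_left _ hC).trans ?_
      apply aux_swap_count G d (by convert hd) (F (a, b)) BT a b hab
      · simp
      · intro π hπ c hc
        have hc' : c ∉ U := fun h => by simp [h] at hc
        have hπ' := (mem_filter.1 (mem_filter.1 hπ).1).2
        refine mem_filter.2 ⟨mem_univ _, ?_⟩
        intro S' hS'
        obtain ⟨x, hx, y, hy, hxp, hyp, hxy, hadj⟩ := hπ' S' (mem_insert_of_mem hS')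
        have key : ∀ z ∈ S', (π * Equiv.swap b c) z = π z := by
          intro z hz
          have hzb : z ≠ b := by
            rintro rfl
            have := hdis S (mem_insert_self _ _) S' (mem_insert_of_mem hS') z hbp hbS hz
            exact hST (this ▸ hS')
          have hzc : z ≠ c := by
            rintro rfl
            exact hc' (mem_biUnion.2 ⟨S', hS', hz⟩)
          rw [Equiv.Perm.mul_apply, Equiv.swap_apply_of_ne_of_ne hzb hzc]
        exact ⟨x, hx, y, hy, hxp, hyp, hxy, by rw [key x hx, key y hy]; exact hadj⟩
      · intro π hπ
        exact (mem_filter.1 hπ).2.2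
    have hBIN : BI.card * N ≤ s ^ 2 * (BT.card * d) := by
      calc BI.card * N ≤ (∑ x ∈ S.erase p ×ˢ S.erase p, (F x).card) * N :=
            Nat.mul_le_mul_right _ ((card_le_card hsub).trans card_biUnion_le)
        _ = ∑ x ∈ S.erase p ×ˢ S.erase p, (F x).card * N := by rw [sum_mul]
        _ ≤ (S.erase p ×ˢ S.erase p).card • (BT.card * d) := sum_le_card_nsmul _ _ _ hF
        _ = s ^ 2 * (BT.card * d) := by rw [card_product, hScard, smul_eq_mul, sq]
    calc BI.card * N ^ (T.card + 1) = (BI.card * N) * N ^ T.card := by ring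
      _ ≤ (s ^ 2 * (BT.card * d)) * N ^ T.card := Nat.mul_le_mul_right _ hBIN
      _ = (s ^ 2 * d) * (BT.card * N ^ T.card) := by ring
      _ ≤ (s ^ 2 * d) * ((Fintype.card V).factorial * (s ^ 2 * d) ^ T.card) :=
          Nat.mul_le_mul_left _ ih'
      _ = _ := by ring

open Finset Classical in
theorem aux_tail {V : Type*} [Fintype V] (G : SimpleGraph V)
    (d : ℕ) (hd : ∀ v, (univ.filter fun w => ¬ G.Adj v w).card ≤ d)
    (p : V) (s J N m : ℕ) (hN : N + 1 + J * (s + 1) ≤ Fintype.card V)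
    (R : Finset (Finset V)) (hT : ∀ S ∈ R, p ∈ S ∧ S.card = s + 1)
    (hdis : ∀ S ∈ R, ∀ S' ∈ R, ∀ x, x ≠ p → x ∈ S → x ∈ S' → S = S')
    (hpos : 0 < (m + 1 - J) * N)
    (hA : 2 * (Fintype.card V * s * d) ≤ (m + 1 - J) * N) :
    (univ.filter fun π : Equiv.Perm V => m ≤ (R.filter fun S => AuxBad G p π S).card).card * 2 ^ J
      ≤ (Fintype.card V).factorial := by
  set n := Fintype.card V with hn
  set E := univ.filter fun π : Equiv.Perm V => m ≤ (R.filter fun S => AuxBad G p π S).card with hE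
  have hr : R.card * s ≤ n := by
    have h1 : (R.biUnion fun S => S.erase p).card = ∑ S ∈ R, (S.erase p).card := by
      apply card_biUnion
      intro S hS S' hS' hne
      refine Finset.disjoint_left.2 ?_
      intro x hx hx'
      rw [mem_erase] at hx hx'
      exact hne (hdis S hS S' hS' x hx.1 hx.2 hx'.2)
    have h2 : ∑ S ∈ R, (S.erase p).card = R.card * s := by
      rw [← smul_eq_mul, ← sum_const]
      apply sum_congr rfl
      intro S hS
      rw [card_erase_of_mem (hT S hS).1, (hT S hS).2]; rfl
    rw [← h2, ← h1]
    exact card_le_univ _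
  have hdc : ∑ π : Equiv.Perm V, ((R.filter fun S => AuxBad G p π S).card).choose J =
      ∑ T ∈ R.powersetCard J,
        (univ.filter fun π : Equiv.Perm V => ∀ S ∈ T, AuxBad G p π S).card := by
    have h1 : ∀ π : Equiv.Perm V, ((R.filter fun S => AuxBad G p π S).card).choose J =
        ∑ T ∈ R.powersetCard J, if (∀ S ∈ T, AuxBad G p π S) then 1 else 0 := by
      intro π
      rw [← card_powersetCard, ← card_filter]
      congr 1
      ext T
      simp only [mem_powersetCard, mem_filter, subset_iff]
      constructor
      · rintro ⟨h, h'⟩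
        exact ⟨⟨fun x hx => (h hx).1, h'⟩, fun x hx => (h hx).2⟩
      · rintro ⟨⟨h, h'⟩, h''⟩
        exact ⟨fun x hx => ⟨h hx, h'' x hx⟩, h'⟩
    simp only [h1]
    rw [sum_comm]
    apply sum_congr rfl
    intro T _
    rw [card_filter]
  have hlow : E.card * m.choose J ≤
      ∑ π : Equiv.Perm V, ((R.filter fun S => AuxBad G p π S).card).choose J := by
    calc E.card * m.choose J = E.card • m.choose J := rfl
      _ ≤ ∑ π ∈ E, ((R.filter fun S => AuxBad G p π S).card).choose J := by
          apply card_nsmul_le_sum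
          intro π hπ
          exact Nat.choose_le_choose J (mem_filter.1 hπ).2
      _ ≤ _ := sum_le_sum_of_subset (subset_univ _)
  have hup : (∑ T ∈ R.powersetCard J,
        (univ.filter fun π : Equiv.Perm V => ∀ S ∈ T, AuxBad G p π S).card) * N ^ J ≤
      R.card.choose J * (n.factorial * (s ^ 2 * d) ^ J) := by
    rw [sum_mul, ← card_powersetCard, ← smul_eq_mul]
    apply sum_le_card_nsmul
    intro T hTm
    obtain ⟨hTR, hTc⟩ := mem_powersetCard.1 hTm
    have := aux_block_count G d hd p s J N hN T (fun S h => hT S (hTR h))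
      (fun S h S' h' => hdis S (hTR h) S' (hTR h')) hTc.le
    rw [hTc] at this
    exact this
  rw [← hdc] at hup
  have h1 : E.card * m.choose J * N ^ J ≤ R.card.choose J * (n.factorial * (s ^ 2 * d) ^ J) :=
    (Nat.mul_le_mul_right _ hlow).trans hup
  have h2 : E.card * ((m + 1 - J) * N) ^ J ≤ n.factorial * (n * s * d) ^ J := by
    calc E.card * ((m + 1 - J) * N) ^ J = E.card * (m + 1 - J) ^ J * N ^ J := by
          rw [mul_pow]; ring
      _ ≤ E.card * m.descFactorial J * N ^ J := by
          gcongr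
          exact Nat.pow_sub_le_descFactorial m J
      _ = J.factorial * (E.card * m.choose J * N ^ J) := by
          rw [Nat.descFactorial_eq_factorial_mul_choose]; ring
      _ ≤ J.factorial * (R.card.choose J * (n.factorial * (s ^ 2 * d) ^ J)) :=
          Nat.mul_le_mul_left _ h1
      _ = R.card.descFactorial J * (n.factorial * (s ^ 2 * d) ^ J) := by
          rw [Nat.descFactorial_eq_factorial_mul_choose]; ring
      _ ≤ R.card ^ J * (n.factorial * (s ^ 2 * d) ^ J) := by
          gcongr
          exact Nat.descFactorial_le_pow _ _
      _ = n.factorial * ((R.card * s) * s * d) ^ J := by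
          rw [mul_left_comm, ← mul_pow]; ring_nf
      _ ≤ n.factorial * (n * s * d) ^ J := by gcongr
  have h3 : (E.card * 2 ^ J) * ((m + 1 - J) * N) ^ J ≤ n.factorial * ((m + 1 - J) * N) ^ J := by
    calc (E.card * 2 ^ J) * ((m + 1 - J) * N) ^ J = 2 ^ J * (E.card * ((m + 1 - J) * N) ^ J) := by
          ring
      _ ≤ 2 ^ J * (n.factorial * (n * s * d) ^ J) := Nat.mul_le_mul_left _ h2
      _ = n.factorial * (2 * (n * s * d)) ^ J := by rw [mul_pow 2]; ring
      _ ≤ _ := by gcongr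
  exact Nat.le_of_mul_le_mul_right h3 (pow_pos hpos J)

theorem aux_exp (K : ℕ) : ∃ j0 : ℕ, ∀ j, j0 ≤ j → K * (j + 1) ≤ 2 ^ j := by
  refine ⟨2 * K + 4, fun j hj => ?_⟩
  induction j, hj using Nat.le_induction with
  | base =>
    have h : K + 2 ≤ 2 ^ (K + 1) := Nat.lt_pow_self (by norm_num : 1 < 2)
    have e : 2 ^ (2 * K + 4) = 4 * (2 ^ (K + 1) * 2 ^ (K + 1)) := by
      rw [show 2 * K + 4 = 2 + ((K + 1) + (K + 1)) by ring, pow_add, pow_add 2 (K+1)]; norm_num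
    rw [e]
    have := Nat.mul_le_mul h h
    nlinarith
  | succ j hj ih =>
    rw [pow_succ]
    nlinarith

open Finset Classical in
theorem aux_exists {V : Type*} [Fintype V] [Nonempty V] (G : SimpleGraph V)
    (d : ℕ) (hd : ∀ v, (univ.filter fun w => ¬ G.Adj v w).card ≤ d)
    (s J N m : ℕ) (hN : N + 1 + J * (s + 1) ≤ Fintype.card V)
    (D : Finset (Finset V)) (hD : ∀ S ∈ D, S.card = s + 1)
    (hdes : ∀ a b : V, a ≠ b → ∃! S, S ∈ D ∧ a ∈ S ∧ b ∈ S)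
    (hpos : 0 < (m + 1 - J) * N)
    (hA : 2 * (Fintype.card V * s * d) ≤ (m + 1 - J) * N)
    (hexp : Fintype.card V < 2 ^ J) :
    ∃ π : Equiv.Perm V, ∀ p,
      ((D.filter fun S => p ∈ S).filter fun S => AuxBad G p π S).card < m := by
  by_contra! hcon
  let E : V → Finset (Equiv.Perm V) := fun p => univ.filter fun π : Equiv.Perm V =>
    m ≤ ((D.filter fun S => p ∈ S).filter fun S => AuxBad G p π S).card
  have hE : ∀ p ∈ (univ : Finset V), (E p).card * 2 ^ J ≤ (Fintype.card V).factorial := by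
    intro p _
    apply aux_tail G d hd p s J N m hN (D.filter fun S => p ∈ S) _ _ hpos hA
    · intro S hS
      rw [mem_filter] at hS
      exact ⟨hS.2, hD S hS.1⟩
    · intro S hS S' hS' x hx h h'
      rw [mem_filter] at hS hS'
      exact (hdes x p hx).unique ⟨hS.1, h, hS.2⟩ ⟨hS'.1, h', hS'.2⟩
  have hcov : (univ : Finset (Equiv.Perm V)) ⊆ univ.biUnion E := by
    intro π _
    obtain ⟨p, hp⟩ := hcon π
    exact mem_biUnion.2 ⟨p, mem_univ _, mem_filter.2 ⟨mem_univ _, hp⟩⟩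
  have h1 : (Fintype.card V).factorial ≤ ∑ p, (E p).card := by
    rw [← Fintype.card_perm, ← card_univ]
    exact (card_le_card hcov).trans card_biUnion_le
  have h2 : (∑ p, (E p).card) * 2 ^ J ≤ Fintype.card V * (Fintype.card V).factorial := by
    rw [sum_mul, ← smul_eq_mul (Fintype.card V)]
    exact sum_le_card_nsmul _ _ _ hE
  have h3 := (Nat.mul_le_mul_right (2 ^ J) h1).trans h2
  have := Nat.factorial_pos (Fintype.card V)
  rw [mul_comm] at h3
  exact absurd (Nat.le_of_mul_le_mul_right h3 this) (by omega)

open Finset Classical in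
theorem aux_degree {V : Type*} [Fintype V] (G : SimpleGraph V)
    (d : ℕ) (hd : ∀ v, (univ.filter fun w => ¬ G.Adj v w).card ≤ d)
    (s X : ℕ) (D : Finset (Finset V)) (hD : ∀ S ∈ D, S.card = s + 1)
    (hdes : ∀ a b : V, a ≠ b → ∃! S, S ∈ D ∧ a ∈ S ∧ b ∈ S)
    (π : Equiv.Perm V) (p : V)
    (hX : ((D.filter fun S => p ∈ S).filter fun S => AuxBad G p π S).card ≤ X) :
    {u : V | s(π p, u) ∈ G.edgeSet ∧ ∃ S ∈ D, ¬ G.IsClique (π '' (S : Set V)) ∧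
      ∀ x ∈ s(π p, u), x ∈ π '' (S : Set V)}.ncard ≤ (X + d) * s := by
  let Q1 := (D.filter fun S => p ∈ S).filter fun S => AuxBad G p π S
  let Q2 := (D.filter fun S => p ∈ S).filter fun S => ∃ a ∈ S, a ≠ p ∧ ¬ G.Adj (π p) (π a)
  have hQ2 : Q2.card ≤ d := by
    refine le_trans ?_ (hd (π p))
    have hch : ∀ S : Finset V, ∃ w : V, S ∈ Q2 → (w ≠ p ∧ w ∈ S ∧ ¬ G.Adj (π p) (π w)) := by
      intro S
      by_cases h : S ∈ Q2
      · obtain ⟨a, ha, hap, hadj⟩ := (mem_filter.1 h).2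
        exact ⟨a, fun _ => ⟨hap, ha, hadj⟩⟩
      · exact ⟨p, fun h' => absurd h' h⟩
    choose f hf using hch
    apply card_le_card_of_injOn (fun S => π (f S))
    · intro S hS
      simpa using (hf S hS).2.2
    · intro S hS S' hS' h
      have h' : f S = f S' := π.injective h
      have hS1 := mem_filter.1 (mem_filter.1 hS).1
      have hS2 := mem_filter.1 (mem_filter.1 hS').1
      refine (hdes (f S) p (hf S hS).1).unique ⟨hS1.1, (hf S hS).2.1, hS1.2⟩
        ⟨hS2.1, ?_, hS2.2⟩
      rw [h']
      exact (hf S' hS').2.1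
  have hsub : {u : V | s(π p, u) ∈ G.edgeSet ∧ ∃ S ∈ D, ¬ G.IsClique (π '' (S : Set V)) ∧
      ∀ x ∈ s(π p, u), x ∈ π '' (S : Set V)} ⊆
      (((Q1 ∪ Q2).biUnion fun S => (S.erase p).image π : Finset V) : Set V) := by
    rintro u ⟨hadj, S, hS, hcl, hx⟩
    rw [SimpleGraph.mem_edgeSet] at hadj
    have hp : p ∈ S := by
      obtain ⟨y, hy, hyp⟩ := hx (π p) (by simp)
      rw [← π.injective hyp]; exact hy
    obtain ⟨y, hy, rfl⟩ := hx u (by simp)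
    have hyp : y ≠ p := by
      rintro rfl
      exact G.irrefl hadj
    simp only [mem_coe, mem_biUnion, mem_image]
    refine ⟨S, ?_, y, mem_erase.2 ⟨hyp, hy⟩, rfl⟩
    have hSp : S ∈ D.filter fun S => p ∈ S := mem_filter.2 ⟨hS, hp⟩
    rw [mem_union]
    by_contra! hno
    apply hcl
    have hn1 : ¬ AuxBad G p π S := fun h => hno.1 (mem_filter.2 ⟨hSp, h⟩)
    have hn2 : ¬ ∃ a ∈ S, a ≠ p ∧ ¬ G.Adj (π p) (π a) := fun h => hno.2 (mem_filter.2 ⟨hSp, h⟩)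
    rintro _ ⟨a, ha, rfl⟩ _ ⟨b, hb, rfl⟩ hne
    have hab : a ≠ b := fun h => hne (h ▸ rfl)
    by_contra hna
    by_cases hap : a = p
    · subst hap
      exact hn2 ⟨b, hb, hab.symm, hna⟩
    by_cases hbp : b = p
    · subst hbp
      exact hn2 ⟨a, ha, hab, fun h => hna h.symm⟩
    exact hn1 ⟨a, ha, b, hb, hap, hbp, hab, hna⟩
  refine (Set.ncard_le_ncard hsub (Finset.finite_toSet _)).trans ?_
  rw [Set.ncard_coe_finset]
  refine (card_biUnion_le_card_mul _ _ s ?_).trans ?_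
  · intro S hS
    have hS' : S ∈ D ∧ p ∈ S := by
      rcases mem_union.1 hS with h | h
      · exact mem_filter.1 (mem_filter.1 h).1
      · exact mem_filter.1 (mem_filter.1 h).1
    refine card_image_le.trans ?_
    rw [card_erase_of_mem hS'.2, hD S hS'.1]; rfl
  · exact Nat.mul_le_mul_right _ ((card_union_le _ _).trans (Nat.add_le_add hX hQ2))

/-- Let `k ≥ 3` and `t = 2k-1`. There exists `n₀` such that for every `n ≥ n₀` with
`n ≡ 1 (mod t(t-1))`, every `t`-design `D` on `[n]` and every graph `G` on `{1,…,n}` with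
minimum degree at least `n·(1 - 1/(9k^10))`, there is a permutation `π` of `{1,…,n}` such that
the graph whose edges are the edges of `G` lying inside some block `π(S)`, `S ∈ D`, with
`G[π(S)]` not complete, has maximum degree at most `6n/k⁷`. -/
theorem exists_good_permutation (k : ℕ) (hk : 3 ≤ k) :
    ∃ n₀ : ℕ, ∀ n : ℕ, n₀ ≤ n → n % ((2 * k - 1) * (2 * k - 2)) = 1 →
      ∀ D : Finset (Finset (Fin n)),
        (∀ S ∈ D, S.card = 2 * k - 1) →
        (∀ a b : Fin n, a ≠ b → ∃! S, S ∈ D ∧ a ∈ S ∧ b ∈ S) →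
        ∀ G : SimpleGraph (Fin n),
          (∀ v, (n : ℝ) * (1 - 1 / (9 * (k : ℝ) ^ 10)) ≤ ((G.neighborSet v).ncard : ℝ)) →
          ∃ π : Equiv.Perm (Fin n),
            ∀ v : Fin n,
              (({u : Fin n | s(v, u) ∈ G.edgeSet ∧ ∃ S ∈ D,
                  ¬ G.IsClique (π '' (S : Set (Fin n))) ∧
                  ∀ x ∈ s(v, u), x ∈ π '' (S : Set (Fin n))}.ncard : ℝ)) ≤
                6 * (n : ℝ) / (k : ℝ) ^ 7 := by
  classical
  obtain ⟨j0, hj0⟩ := aux_exp (k ^ 8)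
  refine ⟨k ^ 8 * j0 + 4, ?_⟩
  intro n hn _ D hD hdes G hG
  obtain ⟨l, rfl⟩ : ∃ l, k = l + 1 := ⟨k - 1, by omega⟩
  have hs : 2 * (l + 1) - 1 = 2 * l + 1 := by omega
  rw [hs] at hD
  have hkpos : 0 < (l + 1) ^ 8 := by positivity
  have : Nonempty (Fin n) := ⟨⟨0, by omega⟩⟩
  set k := l + 1 with hkdef
  set J := n / k ^ 8 with hJ
  have hJ1 : k ^ 8 * J ≤ n := Nat.mul_div_le n _
  have hJ2 : n < k ^ 8 * (J + 1) := Nat.lt_mul_div_succ n hkpos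
  have hjJ : j0 ≤ J := by
    rw [hJ, Nat.le_div_iff_mul_le hkpos]
    nlinarith
  have hexp : n < 2 ^ J := hJ2.trans_le (hj0 J hjJ)
  set d := n / (9 * k ^ 10) with hdd
  have hd1 : 9 * k ^ 10 * d ≤ n := Nat.mul_div_le n _
  have hd : ∀ v, (Finset.univ.filter fun w => ¬ G.Adj v w).card ≤ d := by
    intro v
    have h1 := hG v
    have h2 : (G.neighborSet v).ncard = (Finset.univ.filter fun w => G.Adj v w).card := by
      rw [← Set.ncard_coe_finset]
      congr 1
      ext w
      simp
    have h3 := Finset.card_filter_add_card_filter_not (s := (Finset.univ : Finset (Fin n)))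
      (fun w => G.Adj v w)
    rw [Finset.card_univ, Fintype.card_fin] at h3
    rw [h2] at h1
    rw [hdd, Nat.le_div_iff_mul_le (by positivity)]
    have h3' : ((Finset.univ.filter fun w => G.Adj v w).card : ℝ) +
      ((Finset.univ.filter fun w => ¬ G.Adj v w).card : ℝ) = n := by exact_mod_cast h3
    have hk10 : (0 : ℝ) < 9 * (k : ℝ) ^ 10 := by positivity
    have h4 : ((Finset.univ.filter fun w => ¬ G.Adj v w).card : ℝ) ≤ n / (9 * (k : ℝ) ^ 10) := by
      have : (n : ℝ) * (1 - 1 / (9 * (k : ℝ) ^ 10)) = n - n / (9 * (k : ℝ) ^ 10) := by ring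
      linarith
    rw [le_div_iff₀ hk10] at h4
    exact_mod_cast h4
  have hk7 : 8 * k ≤ k ^ 8 := by
    have : 3 ^ 7 ≤ k ^ 7 := Nat.pow_le_pow_left hk 7
    calc 8 * k ≤ k ^ 7 * k := Nat.mul_le_mul_right _ (by omega)
      _ = k ^ 8 := by ring
  have hJk : 8 * k * J ≤ n := (Nat.mul_le_mul_right _ hk7).trans hJ1
  have hhalf : 2 + 2 * (J * (2 * l + 1)) ≤ n := by
    have h1 : J * (2 * l + 1) ≤ J * (2 * k) := Nat.mul_le_mul_left _ (by omega)
    have h2 : 4 * (J * (2 * k)) ≤ n := by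
      calc 4 * (J * (2 * k)) = 8 * k * J := by ring
        _ ≤ n := hJk
    omega
  set N := n - 1 - J * (2 * l + 1) with hNdef
  have hN2 : n ≤ 2 * N := by omega
  have hm : 2 * J + 1 + 1 - J = J + 2 := by omega
  obtain ⟨π, hπ⟩ := aux_exists G d (by intro v; convert hd v) (2 * l) J N (2 * J + 1)
    (by rw [Fintype.card_fin]; omega) D hD hdes
    (by rw [hm]; apply Nat.mul_pos <;> omega)
    (by
      rw [hm, Fintype.card_fin]
      have e1 : n * n ≤ (k ^ 8 * (J + 2)) * (2 * N) := Nat.mul_le_mul (by nlinarith) hN2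
      have e2 : 2 * k ^ 8 * (2 * (n * (2 * l) * d)) ≤ n * n := by
        calc 2 * k ^ 8 * (2 * (n * (2 * l) * d)) = n * (8 * l * k ^ 8 * d) := by ring
          _ ≤ n * (9 * k ^ 10 * d) := by
              gcongr n * (?_ * d)
              calc 8 * l * k ^ 8 ≤ 9 * k ^ 2 * k ^ 8 := by
                    apply Nat.mul_le_mul_right
                    nlinarith
                _ = 9 * k ^ 10 := by ring
          _ ≤ n * n := Nat.mul_le_mul_left _ hd1
      have e3 : 2 * k ^ 8 * (2 * (n * (2 * l) * d)) ≤ 2 * k ^ 8 * ((J + 2) * N) := by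
        refine e2.trans (e1.trans (le_of_eq ?_)); ring
      exact Nat.le_of_mul_le_mul_left e3 (by positivity))
    (by rw [Fintype.card_fin]; exact hexp)
  refine ⟨π, fun v => ?_⟩
  have hdeg := aux_degree G d (by intro v; convert hd v) (2 * l) (2 * J) D hD hdes π (π.symm v)
    (Nat.lt_succ_iff.1 (hπ _))
  rw [Equiv.apply_symm_apply] at hdeg
  have hkR : (0 : ℝ) < (k : ℝ) ^ 7 := by positivity
  rw [le_div_iff₀ hkR]
  have hfin : ((2 * J + d) * (2 * l)) * k ^ 7 ≤ 6 * n := by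
    have hdk : k ^ 8 * d ≤ n := by
      refine le_trans (Nat.mul_le_mul_right _ ?_) hd1
      calc k ^ 8 ≤ k ^ 10 := Nat.pow_le_pow_right (by omega) (by norm_num)
        _ ≤ 9 * k ^ 10 := by omega
    calc ((2 * J + d) * (2 * l)) * k ^ 7 ≤ ((2 * J + d) * (2 * k)) * k ^ 7 := by
          gcongr; omega
      _ = 4 * (k ^ 8 * J) + 2 * (k ^ 8 * d) := by ring
      _ ≤ 6 * n := by omega
  have := (Nat.mul_le_mul_right (k ^ 7) hdeg).trans hfin
  exact_mod_cast this
end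

section
/- For every integer k ≥ 3 and every ε > 0 there exist δ > 0 and infinitely many n for which there is a graph G on n vertices with minimum degree at least n·(1 - 1/(k+1)) - εn such that ν*_{K_k}(G) ≤ (1-δ)·e(G)/C(k,2). (This shows c_{K_k} ≤ 1/(k+1).) -/
/-- A fractional `H`-packing of `G`: a function `ψ` from the copies of `H` in `G` to `[0,1]`
such that for each edge `e` of `G`, the sum of `ψ` over the copies of `H` containing `e`
is at most `1`. -/
def IsFracPacking {α β : Type*} (G : SimpleGraph α) (H : SimpleGraph β)
    (ψ : G.Subgraph → ℝ) : Prop :=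
  (∀ c, 0 ≤ ψ c ∧ ψ c ≤ 1) ∧ (∀ c, ¬ c.IsCopy H → ψ c = 0) ∧
  ∀ e ∈ G.edgeSet, (∑ᶠ c ∈ {c : G.Subgraph | c.IsCopy H ∧ e ∈ c.edgeSet}, ψ c) ≤ 1

open Finset Classical in
lemma uk_dual {V : Type*} [Fintype V] (G : SimpleGraph V) (k : ℕ) (W : V → V → ℝ)
    (hW0 : ∀ u v, 0 ≤ W u v) (B : ℝ)
    (hW : ∀ c : G.Subgraph, c.IsCopy (⊤ : SimpleGraph (Fin k)) →
      B ≤ ∑ u, ∑ v, if c.Adj u v then W u v else 0)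
    (ψ : G.Subgraph → ℝ) (hψ : IsFracPacking G (⊤ : SimpleGraph (Fin k)) ψ) :
    B * (∑ᶠ c ∈ {c : G.Subgraph | c.IsCopy (⊤ : SimpleGraph (Fin k))}, ψ c) ≤
      ∑ u, ∑ v, if G.Adj u v then W u v else 0 := by
  obtain ⟨h01, h0, he⟩ := hψ
  have : Fintype G.Subgraph := Fintype.ofFinite _
  have e1 : (∑ᶠ c ∈ {c : G.Subgraph | c.IsCopy (⊤ : SimpleGraph (Fin k))}, ψ c)
      = ∑ c, ψ c := by
    rw [finsum_mem_def, finsum_eq_sum_of_fintype]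
    refine sum_congr rfl fun c _ => ?_
    by_cases hc : c.IsCopy (⊤ : SimpleGraph (Fin k))
    · rw [Set.indicator_of_mem]; exact hc
    · rw [Set.indicator_of_notMem, h0 c hc]; exact hc
  have e2 : ∀ u v, G.Adj u v → (∑ c : G.Subgraph, if c.Adj u v then ψ c else 0) ≤ 1 := by
    intro u v huv
    refine le_trans (le_of_eq ?_) (he s(u, v) huv)
    rw [finsum_mem_def, finsum_eq_sum_of_fintype]
    refine sum_congr rfl fun c _ => ?_
    by_cases hc : c.IsCopy (⊤ : SimpleGraph (Fin k))
    · by_cases ha : c.Adj u v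
      · rw [Set.indicator_of_mem, if_pos ha]
        exact ⟨hc, ha⟩
      · rw [Set.indicator_of_notMem, if_neg ha]
        exact fun h => ha h.2
    · rw [Set.indicator_of_notMem, h0 c hc, ite_self]
      exact fun h => hc h.1
  rw [e1, mul_sum]
  calc ∑ c, B * ψ c ≤ ∑ c : G.Subgraph, (∑ u, ∑ v, if c.Adj u v then W u v else 0) * ψ c := by
        refine sum_le_sum fun c _ => ?_
        by_cases hc : c.IsCopy (⊤ : SimpleGraph (Fin k))
        · exact mul_le_mul_of_nonneg_right (hW c hc) (h01 c).1
        · simp [h0 c hc]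
    _ = ∑ u, ∑ v, W u v * ∑ c : G.Subgraph, (if c.Adj u v then ψ c else 0) := by
        simp_rw [sum_mul, mul_sum]
        rw [sum_comm]
        refine sum_congr rfl fun u _ => ?_
        rw [sum_comm]
        refine sum_congr rfl fun v _ => sum_congr rfl fun c _ => ?_
        split_ifs <;> simp
    _ ≤ _ := by
        refine sum_le_sum fun u _ => sum_le_sum fun v _ => ?_
        split_ifs with huv
        · exact mul_le_of_le_one_right (hW0 u v) (e2 u v huv)
        · rw [sum_eq_zero, mul_zero]
          intro c _
          rw [if_neg]
          exact fun h => huv h.adj_sub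

open Finset Classical in
lemma uk_copy {V : Type*} [Fintype V] (G : SimpleGraph V) (k : ℕ) (c : G.Subgraph)
    (hc : c.IsCopy (⊤ : SimpleGraph (Fin k))) :
    ∃ S : Finset V, S.card = k ∧ ∀ u v, c.Adj u v ↔ u ∈ S ∧ v ∈ S ∧ u ≠ v := by
  obtain ⟨f⟩ := hc
  refine ⟨c.verts.toFinset, ?_, ?_⟩
  · rw [Set.toFinset_card, Fintype.card_congr f.toEquiv, Fintype.card_fin]
  · intro u v
    simp only [Set.mem_toFinset]
    constructor
    · intro h
      exact ⟨h.fst_mem, h.snd_mem, h.ne⟩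
    · rintro ⟨hu, hv, hne⟩
      have : c.coe.Adj ⟨u, hu⟩ ⟨v, hv⟩ := by
        rw [← f.map_adj_iff]
        simp [hne]
      exact this

/-- edge weight functional -/
noncomputable def ukPhi (p x y : ℕ) : ℝ :=
  if x < p ∧ y < p then (if x = y then 2 * (p : ℝ) - 2 else -1) else 0

open Finset Classical in
lemma uk_clique {V : Type*} [Fintype V] (p : ℕ) (cl : V → ℕ) (S : Finset V)
    (hs : (S.filter (fun v => cl v < p)).card = 2 * p - 1 ∨
      (S.filter (fun v => cl v < p)).card = 2 * p) (hp : 1 ≤ p) :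
    0 ≤ ∑ u ∈ S, ∑ v ∈ S, if u ≠ v then ukPhi p (cl u) (cl v) else 0 := by
  set T := S.filter (fun v => cl v < p) with hT
  have e1 : (∑ u ∈ S, ∑ v ∈ S, if u ≠ v then ukPhi p (cl u) (cl v) else 0) =
      ∑ u ∈ T, ∑ v ∈ T, if u ≠ v then ukPhi p (cl u) (cl v) else 0 := by
    simp only [hT, sum_filter]
    refine sum_congr rfl fun u _ => ?_
    split_ifs with h
    · refine sum_congr rfl fun v _ => ?_
      unfold ukPhi
      split_ifs <;> simp_all
    · refine sum_eq_zero fun v _ => ?_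
      simp [ukPhi, h]
  have e2 : ∀ u ∈ T, ∀ v ∈ T, (if u ≠ v then ukPhi p (cl u) (cl v) else 0) =
      (2 * (p : ℝ) - 1) * (∑ i ∈ range p, (if cl u = i then 1 else 0) * (if cl v = i then 1 else 0))
        - 1 - (if u = v then 2 * (p : ℝ) - 2 else 0) := by
    intro u hu v hv
    have hu' : cl u < p := (mem_filter.1 hu).2
    have hv' : cl v < p := (mem_filter.1 hv).2
    have : (∑ i ∈ range p, (if cl u = i then (1:ℝ) else 0) * (if cl v = i then 1 else 0))
        = if cl u = cl v then 1 else 0 := by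
      simp only [ite_mul, one_mul, zero_mul]
      rw [sum_ite_eq]
      simp [hu', eq_comm]
    rw [this]
    unfold ukPhi
    by_cases huv : u = v
    · subst huv; simp; ring
    · by_cases hc : cl u = cl v
      · simp [huv, hc, hv']; ring
      · simp [huv, hc, hu', hv']
  rw [e1, sum_congr rfl (fun u hu => sum_congr rfl (e2 u hu))]
  set x : ℕ → ℕ := fun i => (T.filter (fun v => cl v = i)).card with hx
  have hsum : ∑ i ∈ range p, x i = T.card := by
    refine (card_eq_sum_card_fiberwise ?_).symm
    intro v hv
    simpa using (mem_filter.1 hv).2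
  have e3 : (∑ u ∈ T, ∑ v ∈ T, ∑ i ∈ range p,
      (if cl u = i then (1:ℝ) else 0) * (if cl v = i then 1 else 0)) =
      ∑ i ∈ range p, (x i : ℝ) * x i := by
    have : ∀ u ∈ T, (∑ v ∈ T, ∑ i ∈ range p,
      (if cl u = i then (1:ℝ) else 0) * (if cl v = i then 1 else 0)) =
      ∑ i ∈ range p, ∑ v ∈ T, (if cl u = i then (1:ℝ) else 0) * (if cl v = i then 1 else 0) :=
      fun u _ => sum_comm
    rw [sum_congr rfl this, sum_comm]
    refine sum_congr rfl fun i _ => ?_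
    rw [← sum_mul_sum]
    simp [hx]
  have e4 : (3 * (T.card : ℝ) - 2 * p) ≤ ∑ i ∈ range p, (x i : ℝ) * x i := by
    have : ∀ i ∈ range p, 3 * (x i : ℝ) - 2 ≤ (x i : ℝ) * x i := by
      intro i _
      rcases Nat.lt_or_ge (x i) 2 with h | h
      · interval_cases x i <;> norm_num
      · have : (2 : ℝ) ≤ x i := by exact_mod_cast h
        nlinarith
    have h := sum_le_sum this
    rw [sum_sub_distrib, ← mul_sum, ← Nat.cast_sum, hsum] at h
    simp at h
    linarith
  simp only [sum_sub_distrib, ← mul_sum]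
  rw [e3]
  have hd : (∑ u ∈ T, ∑ v ∈ T, if u = v then 2 * (p : ℝ) - 2 else 0) =
      T.card * (2 * (p : ℝ) - 2) := by
    rw [sum_congr rfl (fun u hu => by rw [sum_ite_eq, if_pos hu])]
    rw [sum_const, nsmul_eq_mul]
  rw [hd]
  simp only [sum_const, nsmul_eq_mul, mul_one]
  have hp' : (1 : ℝ) ≤ p := by exact_mod_cast hp
  have hm : (2 * (p : ℝ) - 1) * (3 * (T.card : ℝ) - 2 * p) ≤
      (2 * (p : ℝ) - 1) * ∑ i ∈ range p, (x i : ℝ) * x i :=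
    mul_le_mul_of_nonneg_left e4 (by linarith)
  have hs' : (T.card : ℝ) = 2 * p - 1 ∨ (T.card : ℝ) = 2 * p := by
    rcases hs with h | h
    · left; rw [h]; push_cast [show 1 ≤ 2 * p by omega]; ring
    · right; rw [h]; push_cast; ring
  rcases hs' with h | h <;> rw [h] at hm ⊢ <;> nlinarith

/-- the construction -/
def ukGraph {V : Type*} (p : ℕ) (a b : V → ℕ) : SimpleGraph V where
  Adj u v := a u / 2 ≠ a v / 2 ∨ (a u < 2 * p ∧ a u = a v ∧ b u ≠ b v)
  symm := ⟨by
    intro u v h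
    rcases h with h | ⟨h1, h2, h3⟩
    · exact Or.inl h.symm
    · exact Or.inr ⟨h2 ▸ h1, h2.symm, h3.symm⟩⟩
  loopless := ⟨by
    intro u h
    rcases h with h | ⟨h1, h2, h3⟩
    · exact h rfl
    · exact h3 rfl⟩

open Finset Classical in
lemma uk_main {V : Type*} [Fintype V] (k L t p : ℕ) (hk : 3 ≤ k) (hp : p = (k + 1) / 2)
    (hL : 0 < L) (a b : V → ℕ)
    (ha : ∀ v, a v < k + 1) (hcard : Fintype.card V = (k + 1) * (L * t))
    (hA : ∀ i < k + 1, (univ.filter (fun v => a v = i)).card = L * t)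
    (hB : ∀ u, (univ.filter (fun v => a v = a u ∧ b v = b u)).card = t) :
    (∀ u, Fintype.card V ≤ ((ukGraph p a b).neighborSet u).ncard + (L * t + t)) ∧
    ∀ ψ : (ukGraph p a b).Subgraph → ℝ,
      IsFracPacking (ukGraph p a b) (⊤ : SimpleGraph (Fin k)) ψ →
        (∑ᶠ c ∈ {c : (ukGraph p a b).Subgraph | c.IsCopy (⊤ : SimpleGraph (Fin k))}, ψ c) ≤
          (1 - 1 / (((k : ℝ) + 1) ^ 2 * L)) *
            (((ukGraph p a b).edgeSet.ncard : ℝ) / ((k : ℝ) * ((k : ℝ) - 1) / 2)) := by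
  set G := ukGraph p a b with hG
  have hadj : ∀ u v, G.Adj u v ↔ a u / 2 ≠ a v / 2 ∨ (a u < 2 * p ∧ a u = a v ∧ b u ≠ b v) :=
    fun u v => Iff.rfl
  constructor
  · intro u
    have hsub : (univ : Finset V) ⊆ (G.neighborSet u).toFinset ∪
        (univ.filter (fun v => a v = (if a u < 2 * p then (if a u % 2 = 0 then a u + 1 else a u - 1)
          else a u)) ∪ univ.filter (fun v => a v = a u ∧ b v = b u)) := by
      intro v _
      have h1 := ha u
      have h2 := ha v
      by_cases hn : G.Adj u v
      · exact mem_union_left _ (by simpa using hn)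
      · refine mem_union_right _ ?_
        rw [hadj] at hn
        by_cases h3 : a v = a u ∧ b v = b u
        · exact mem_union_right _ (by simpa using h3)
        · refine mem_union_left _ ?_
          rw [mem_filter]
          refine ⟨mem_univ _, ?_⟩
          split_ifs <;> omega
    have h := card_le_card hsub
    rw [Set.ncard_eq_toFinset_card']
    refine h.trans ((card_union_le _ _).trans (Nat.add_le_add_left ((card_union_le _ _).trans ?_) _))
    rw [hA, hB]
    have h1 := ha u
    split_ifs <;> omega
  · intro ψ hψ
    have hp2 : 2 ≤ p := by omega
    have hp2' : (2 : ℝ) ≤ p := by exact_mod_cast hp2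
    have hk' : (3 : ℝ) ≤ k := by exact_mod_cast hk
    have hL' : (0 : ℝ) < L := by exact_mod_cast hL
    have hd := uk_dual G k (fun u v => 1 + ukPhi p (a u / 2) (a v / 2)) (by
      intro u v
      unfold ukPhi
      split_ifs <;> linarith) ((k : ℝ) * (k - 1)) (by
      intro c hc
      obtain ⟨S, hSk, hS⟩ := uk_copy G k c hc
      have hcl := uk_clique p (fun v => a v / 2) S (by
        have hI : (S.filter (fun v => ¬ a v / 2 < p)).card ≤ 1 := by
          rw [card_le_one]
          intro u hu v hv
          by_contra hne
          rw [mem_filter] at hu hv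
          have := (hS u v).2 ⟨hu.1, hv.1, hne⟩
          have := (hadj u v).1 this.adj_sub
          have h1 := ha u
          have h2 := ha v
          omega
        have hsum := card_filter_add_card_filter_not (s := S) (fun v => a v / 2 < p)
        rcases Nat.even_or_odd' k with ⟨r, hr | hr⟩
        · omega
        · have : (S.filter (fun v => ¬ a v / 2 < p)) = ∅ := by
            rw [filter_eq_empty_iff]
            intro v _
            have := ha v
            omega
          rw [this, card_empty] at hsum
          omega) (by omega)
      have e : (∑ u, ∑ v, if c.Adj u v then 1 + ukPhi p (a u / 2) (a v / 2) else 0) =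
          (∑ u ∈ S, ∑ v ∈ S, if u ≠ v then (1:ℝ) else 0) +
          ∑ u ∈ S, ∑ v ∈ S, if u ≠ v then ukPhi p (a u / 2) (a v / 2) else 0 := by
        simp_rw [← sum_add_distrib]
        rw [← sum_subset (subset_univ S)]
        · refine sum_congr rfl fun u hu => ?_
          rw [← sum_subset (subset_univ S)]
          · refine sum_congr rfl fun v hv => ?_
            simp only [hS, hu, hv, true_and]
            split_ifs <;> simp
          · intro v _ hv
            simp [hS, hv]
        · intro u _ hu
          simp [hS, hu]
      rw [e]
      have e' : (∑ u ∈ S, ∑ v ∈ S, if u ≠ v then (1:ℝ) else 0) = k * (k - 1) := by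
        have : ∀ u ∈ S, (∑ v ∈ S, if u ≠ v then (1:ℝ) else 0) = k - 1 := by
          intro u hu
          have h3 : ∀ v ∈ S, (if u ≠ v then (1:ℝ) else 0) = 1 - if u = v then 1 else 0 := by
            intro v _
            split_ifs <;> simp_all
          rw [sum_congr rfl h3, sum_sub_distrib, sum_ite_eq, if_pos hu]
          simp [hSk]
        rw [sum_congr rfl this, sum_const, nsmul_eq_mul, hSk]
      rw [e']
      linarith) ψ hψ
    have hA' : ∀ i < k + 1, (∑ v, if a v = i then (1:ℝ) else 0) = L * t := by
      intro i hi
      rw [sum_boole, hA i hi]; push_cast; ring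
    have hB' : ∀ u, (∑ v, if a v = a u ∧ b v = b u then (1:ℝ) else 0) = t := by
      intro u
      rw [sum_boole, hB u]
    have hJ : (∑ v, if a v < 2 * p then (1:ℝ) else 0) = 2 * p * (L * t) := by
      have : ∀ v, (if a v < 2 * p then (1:ℝ) else 0) = ∑ i ∈ range (2 * p),
          if a v = i then 1 else 0 := by
        intro v
        rw [sum_ite_eq]; simp
      simp_rw [this]
      rw [sum_comm, sum_congr rfl (fun i hi => hA' i (by have := mem_range.1 hi; omega))]
      simp
    -- row sums
    have hrow : ∀ u, (∑ v, if G.Adj u v then ukPhi p (a u / 2) (a v / 2) else 0) =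
        - (2 * (p : ℝ) - 2) * t * (if a u < 2 * p then 1 else 0) := by
      intro u
      have hu := ha u
      by_cases h : a u < 2 * p
      · set q := if a u % 2 = 0 then a u + 1 else a u - 1 with hq
        have hqk : q < k + 1 := by rw [hq]; split_ifs <;> omega
        have : ∀ v, (if G.Adj u v then ukPhi p (a u / 2) (a v / 2) else 0) =
            - (if a v < 2 * p then (1:ℝ) else 0) + (if a v = a u then 1 else 0)
            + (if a v = q then 1 else 0) + (2 * (p : ℝ) - 2) * ((if a v = a u then 1 else 0)
              - (if a v = a u ∧ b v = b u then 1 else 0)) := by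
          intro v
          have hau : a u / 2 < p := by omega
          by_cases h1 : a v = a u
          · have h2 : ¬ (a v = q) := by rw [hq]; split_ifs <;> omega
            have h3 : ¬ (a u = q) := by rw [← h1]; exact h2
            by_cases h4 : b v = b u
            · simp [hadj, ukPhi, h1, h3, h4, h]
            · simp [hadj, ukPhi, h1, h3, h4, h, hau, Ne.symm h4]
          · by_cases h2 : a v = q
            · have h5 : a v / 2 = a u / 2 := by rw [h2, hq]; split_ifs <;> omega
              have h6 : a v < 2 * p := by omega
              have h7 : ¬ q = a u := by rw [← h2]; exact h1
              have h8 : q < 2 * p := by rw [← h2]; exact h6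
              have h9 : ¬ G.Adj u v := by
                rw [hadj]; omega
              simp [h9, h2, h7, h8]
            · have h5 : a u / 2 ≠ a v / 2 := by
                intro h5
                apply h2
                rw [hq]; split_ifs <;> omega
              have h9 : G.Adj u v := (hadj u v).2 (Or.inl h5)
              have h10 : a v / 2 < p ↔ a v < 2 * p := by omega
              simp only [h9, ukPhi, h1, h2, h5, hau, h10, if_true, true_and, if_false, false_and]
              split_ifs <;> simp
        simp_rw [this]
        rw [sum_add_distrib, sum_add_distrib, sum_add_distrib, ← mul_sum, sum_sub_distrib,
          sum_neg_distrib, hJ, hA' _ hu, hA' _ hqk, hB', if_pos h]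
        ring
      · rw [if_neg h, mul_zero]
        refine sum_eq_zero fun v _ => ?_
        have : ¬ (a u / 2 < p) := by omega
        simp [ukPhi, this]
    have hE : (∑ u, ∑ v, if G.Adj u v then (1:ℝ) else 0) = 2 * (G.edgeSet.ncard : ℝ) := by
      have := G.sum_degrees_eq_twice_card_edges
      rw [Set.ncard_eq_toFinset_card']
      have h2 : (G.edgeSet.toFinset) = G.edgeFinset := rfl
      rw [h2]
      have h3 : ((∑ u, G.degree u : ℕ) : ℝ) = 2 * (G.edgeFinset.card : ℝ) := by
        rw [this]; push_cast; ring
      rw [← h3]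
      push_cast
      refine sum_congr rfl fun u _ => ?_
      rw [sum_boole, ← G.card_neighborFinset_eq_degree, G.neighborFinset_eq_filter]
    have hEn : 2 * (G.edgeSet.ncard : ℝ) ≤ ((k + 1) * (L * t)) ^ 2 := by
      rw [← hE]
      calc _ ≤ ∑ u : V, ∑ v : V, (1:ℝ) := by
            refine sum_le_sum fun u _ => sum_le_sum fun v _ => ?_
            split_ifs <;> norm_num
        _ = _ := by
            simp [hcard]; ring
    have hT : (∑ u, ∑ v, if G.Adj u v then 1 + ukPhi p (a u / 2) (a v / 2) else 0) =
        2 * (G.edgeSet.ncard : ℝ) - (2 * (p : ℝ) - 2) * t * (2 * p * (L * t)) := by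
      have : ∀ u v, (if G.Adj u v then 1 + ukPhi p (a u / 2) (a v / 2) else 0) =
          (if G.Adj u v then (1:ℝ) else 0) +
            (if G.Adj u v then ukPhi p (a u / 2) (a v / 2) else 0) := by
        intro u v; split_ifs <;> simp
      simp_rw [this, sum_add_distrib]
      rw [hE]
      simp_rw [hrow]
      rw [← mul_sum, hJ]; ring
    have hd2 := hd.trans_eq hT
    set E := (G.edgeSet.ncard : ℝ)
    set X := (∑ᶠ c ∈ {c : G.Subgraph | c.IsCopy (⊤ : SimpleGraph (Fin k))}, ψ c)
    have hC : 0 < (k : ℝ) * (k - 1) := by nlinarith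
    have hδ : 1 / (((k : ℝ) + 1) ^ 2 * L) * (2 * E) ≤ L * t * t := by
      rw [one_div, inv_mul_le_iff₀ (by positivity)]
      refine hEn.trans (le_of_eq (by ring))
    have hY : (0:ℝ) ≤ L * t * t := by positivity
    have hpp : 1 ≤ (2 * (p : ℝ) - 2) * (2 * p) := by nlinarith
    have hfin : (k : ℝ) * (k - 1) * X ≤ (1 - 1 / (((k : ℝ) + 1) ^ 2 * L)) * (2 * E) := by
      nlinarith
    have : (1 - 1 / (((k : ℝ) + 1) ^ 2 * L)) * (E / ((k : ℝ) * (k - 1) / 2)) =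
        (1 - 1 / (((k : ℝ) + 1) ^ 2 * L)) * (2 * E) / ((k : ℝ) * (k - 1)) := by
      field_simp
    rw [this, le_div_iff₀ hC]
    linarith


/-- For every integer `k ≥ 3` and every `ε > 0` there exist `δ > 0` and infinitely many `n` for
which there is a graph `G` on `n` vertices with minimum degree at least `n·(1-1/(k+1)) - εn`
such that every fractional `K_k`-packing of `G` has total weight at most
`(1-δ)·e(G)/C(k,2)`. -/
theorem upper_bound_c_kk (k : ℕ) (hk : 3 ≤ k) (ε : ℝ) (hε : 0 < ε) :
    ∃ δ : ℝ, 0 < δ ∧ ∀ m : ℕ, ∃ n : ℕ, m ≤ n ∧ ∃ G : SimpleGraph (Fin n),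
      (∀ v, (n : ℝ) * (1 - 1 / ((k : ℝ) + 1)) - ε * (n : ℝ) ≤ ((G.neighborSet v).ncard : ℝ)) ∧
      ∀ ψ : G.Subgraph → ℝ, IsFracPacking G (⊤ : SimpleGraph (Fin k)) ψ →
        (∑ᶠ c ∈ {c : G.Subgraph | c.IsCopy (⊤ : SimpleGraph (Fin k))}, ψ c) ≤
          (1 - δ) * ((G.edgeSet.ncard : ℝ) / ((k : ℝ) * ((k : ℝ) - 1) / 2)) := by
  classical
  obtain ⟨L, hL⟩ := exists_nat_gt (1 / ε)
  have hL0' : (0 : ℝ) < L := lt_trans (by positivity) hL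
  have hL0 : 0 < L := by exact_mod_cast hL0'
  refine ⟨1 / (((k : ℝ) + 1) ^ 2 * L), by positivity, fun m => ?_⟩
  set t := m + 1 with ht
  let e : Fin ((k + 1) * (L * t)) ≃ Fin (k + 1) × (Fin L × Fin t) :=
    finProdFinEquiv.symm.trans (Equiv.prodCongr (Equiv.refl _) finProdFinEquiv.symm)
  have key := uk_main (V := Fin ((k + 1) * (L * t))) k L t ((k + 1) / 2) hk rfl hL0
    (fun v => ((e v).1 : ℕ)) (fun v => ((e v).2.1 : ℕ)) (fun v => (e v).1.2) (by simp)
    (by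
      intro i hi
      rw [← Fintype.card_subtype]
      have e2 : {v // ((e v).1 : ℕ) = i} ≃ Fin L × Fin t :=
        { toFun := fun v => (e v.1).2
          invFun := fun y => ⟨e.symm (⟨i, hi⟩, y), by simp⟩
          left_inv := by
            rintro ⟨v, hv⟩
            apply Subtype.ext
            apply e.injective
            simp only [Equiv.apply_symm_apply]
            exact Prod.ext (Fin.ext hv.symm) rfl
          right_inv := by intro y; simp }
      rw [Fintype.card_congr e2]; simp)
    (by
      intro u
      rw [← Fintype.card_subtype]
      have e2 : {v // ((e v).1 : ℕ) = (e u).1 ∧ ((e v).2.1 : ℕ) = (e u).2.1} ≃ Fin t :=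
        { toFun := fun v => (e v.1).2.2
          invFun := fun y => ⟨e.symm ((e u).1, ((e u).2.1, y)), by simp⟩
          left_inv := by
            rintro ⟨v, hv⟩
            apply Subtype.ext
            apply e.injective
            simp only [Equiv.apply_symm_apply]
            exact Prod.ext (Fin.ext hv.1.symm) (Prod.ext (Fin.ext hv.2.symm) rfl)
          right_inv := by intro y; simp }
      rw [Fintype.card_congr e2]; simp)
  refine ⟨(k + 1) * (L * t), ?_, ukGraph ((k + 1) / 2) (fun v => ((e v).1 : ℕ))
    (fun v => ((e v).2.1 : ℕ)), ?_, key.2⟩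
  · have h1 : t ≤ L * t := Nat.le_mul_of_pos_left t hL0
    have h2 : L * t ≤ (k + 1) * (L * t) := Nat.le_mul_of_pos_left _ (by omega)
    omega
  · intro v
    have h := key.1 v
    rw [Fintype.card_fin] at h
    have h' : (((k + 1) * (L * t) : ℕ) : ℝ) ≤ _ := Nat.cast_le (α := ℝ).2 h
    rw [Nat.cast_add] at h'
    have h3 : (((k + 1) * (L * t) : ℕ) : ℝ) * (1 - 1 / ((k : ℝ) + 1)) =
        (((k + 1) * (L * t) : ℕ) : ℝ) - L * t := by
      push_cast
      field_simp
    have h4 : (t : ℝ) ≤ ε * (((k + 1) * (L * t) : ℕ) : ℝ) := by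
      have h5 : 1 ≤ ε * L := by
        rw [div_lt_iff₀ hε] at hL
        linarith
      have h6 : (t : ℝ) ≤ ε * L * t := le_mul_of_one_le_left (by positivity) h5
      have h7 : 0 ≤ (k : ℝ) * (ε * L * t) := by positivity
      push_cast at h6 h7 ⊢
      nlinarith
    rw [h3]
    push_cast at h' h4 ⊢
    linarith
end

section
/- Let H, K and G be graphs, where H and K each have at least one edge. If G has a fractional K-decomposition and K has a fractional H-decomposition, then G has a fractional H-decomposition. -/
/-- A fractional `H`-decomposition of `G`: an assignment of nonnegative real weights to the
copies of `H` in `G` such that for each edge `e` of `G`, the sum of the weights of the copies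
of `H` containing `e` equals `1`. -/
def IsFracDecomp {α β : Type*} (G : SimpleGraph α) (H : SimpleGraph β)
    (ψ : G.Subgraph → ℝ) : Prop :=
  (∀ c, 0 ≤ ψ c) ∧ (∀ c, ¬ c.IsCopy H → ψ c = 0) ∧
  ∀ e ∈ G.edgeSet, (∑ᶠ c ∈ {c : G.Subgraph | c.IsCopy H ∧ e ∈ c.edgeSet}, ψ c) = 1

open Classical in
/-- Reformulation of the edge condition with a sum over a finite type. -/
lemma finsum_copies {α β : Type*} [Fintype α] (G : SimpleGraph α) (H : SimpleGraph β)
    [Fintype G.Subgraph] (ψ : G.Subgraph → ℝ) (h0 : ∀ c, ¬ c.IsCopy H → ψ c = 0) (e : Sym2 α) :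
    (∑ᶠ c ∈ {c : G.Subgraph | c.IsCopy H ∧ e ∈ c.edgeSet}, ψ c)
      = ∑ c, if e ∈ c.edgeSet then ψ c else 0 := by
  rw [finsum_mem_def, finsum_eq_sum_of_fintype]
  refine Finset.sum_congr rfl fun c _ => ?_
  simp only [Set.indicator, Set.mem_ofPred_eq]
  by_cases hc : c.IsCopy H
  · simp [hc]
  · simp [hc, h0 c hc]

/-- Transport of subgraphs of `K` to a copy `c` of `K` in `G`. -/
lemma copy_transport {α β γ : Type*} (H : SimpleGraph β) (K : SimpleGraph γ) (G : SimpleGraph α)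
    (c : G.Subgraph) (hc : c.IsCopy K) :
    ∃ F : K.Subgraph → G.Subgraph,
      (∀ d, d.IsCopy H → (F d).IsCopy H) ∧
      (∀ e ∈ c.edgeSet, ∃ e' ∈ K.edgeSet, ∀ d, e ∈ (F d).edgeSet ↔ e' ∈ d.edgeSet) ∧
      (∀ e, e ∉ c.edgeSet → ∀ d, e ∉ (F d).edgeSet) := by
  obtain ⟨f⟩ := hc
  let φ : K →g G := c.hom.comp f.symm.toHom
  have hφ : Function.Injective φ := fun x y h => f.symm.injective (Subtype.ext h)
  have hφc : ∀ x y, c.Adj (φ x) (φ y) ↔ K.Adj x y := fun x y => f.symm.map_adj_iff (v := x) (w := y)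
  have hsurj : ∀ a ∈ c.verts, ∃ x, φ x = a := fun a ha =>
    ⟨f ⟨a, ha⟩, congrArg Subtype.val (f.symm_apply_apply ⟨a, ha⟩)⟩
  have hadj : ∀ (d : K.Subgraph) x y, (d.map φ).Adj (φ x) (φ y) ↔ d.Adj x y := by
    intro d x y
    constructor
    · rintro ⟨x', y', h, hx, hy⟩
      rwa [hφ hx, hφ hy] at h
    · intro h
      exact ⟨x, y, h, rfl, rfl⟩
  refine ⟨fun d => d.map φ, ?_, ?_, ?_⟩
  · rintro d ⟨g⟩
    let E : d.verts ≃ (d.map φ).verts := Equiv.Set.image φ d.verts hφ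
    have i : d.coe ≃g (d.map φ).coe := ⟨E, fun {x y} => hadj d x y⟩
    exact ⟨i.symm.trans g⟩
  · intro e
    induction e with
    | _ a b =>
      intro h
      rw [SimpleGraph.Subgraph.mem_edgeSet] at h
      obtain ⟨x, rfl⟩ := hsurj a h.fst_mem
      obtain ⟨y, rfl⟩ := hsurj b h.snd_mem
      refine ⟨s(x, y), (hφc x y).1 h, fun d => ?_⟩
      exact hadj d x y
  · intro e
    induction e with
    | _ a b =>
      intro h d hd
      rw [SimpleGraph.Subgraph.mem_edgeSet] at h hd
      obtain ⟨x, y, hxy, rfl, rfl⟩ := hd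
      exact h ((hφc x y).2 hxy.adj_sub)

/-- If `G` has a fractional `K`-decomposition and `K` has a fractional `H`-decomposition, where
`H` and `K` each have at least one edge, then `G` has a fractional `H`-decomposition. -/
theorem frac_decomposition_trans {α β γ : Type*} [Fintype α] [Fintype β] [Fintype γ]
    (H : SimpleGraph β) (K : SimpleGraph γ) (G : SimpleGraph α)
    (hH : H.edgeSet.Nonempty) (hK : K.edgeSet.Nonempty)
    (hGK : ∃ ψ : G.Subgraph → ℝ, IsFracDecomp G K ψ)
    (hKH : ∃ ψ : K.Subgraph → ℝ, IsFracDecomp K H ψ) :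
    ∃ ψ : G.Subgraph → ℝ, IsFracDecomp G H ψ := by
  classical
  obtain ⟨ψ₁, h1n, h1z, h1e⟩ := hGK
  obtain ⟨ψ₂, h2n, h2z, h2e⟩ := hKH
  have : Fintype G.Subgraph := Fintype.ofFinite _
  have : Fintype K.Subgraph := Fintype.ofFinite _
  have key := copy_transport H K G
  choose! F hF1 hF2 hF3 using key
  let ψ : G.Subgraph → ℝ := fun x => ∑ c, ∑ d, if F c d = x then ψ₁ c * ψ₂ d else 0
  have hz : ∀ x, ¬ x.IsCopy H → ψ x = 0 := by
    intro x hx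
    refine Finset.sum_eq_zero fun c _ => Finset.sum_eq_zero fun d _ => ?_
    split_ifs with h
    · by_cases hc : c.IsCopy K
      · by_cases hd : d.IsCopy H
        · exact absurd (h ▸ hF1 c hc d hd) hx
        · rw [h2z d hd, mul_zero]
      · rw [h1z c hc, zero_mul]
    · rfl
  refine ⟨ψ, fun x => ?_, hz, fun e he => ?_⟩
  · refine Finset.sum_nonneg fun c _ => Finset.sum_nonneg fun d _ => ?_
    split_ifs
    · exact mul_nonneg (h1n c) (h2n d)
    · exact le_rfl
  · rw [finsum_copies G H ψ hz e]
    rw [← h1e e he, finsum_copies G K ψ₁ h1z e]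
    have step : ∀ x, (if e ∈ x.edgeSet then ψ x else 0) =
        ∑ c, ∑ d, if F c d = x then (if e ∈ (F c d).edgeSet then ψ₁ c * ψ₂ d else 0) else 0 := by
      intro x
      split_ifs with hx
      · refine Finset.sum_congr rfl fun c _ => Finset.sum_congr rfl fun d _ => ?_
        by_cases h : F c d = x
        · subst h; simp [hx]
        · simp [h]
      · symm
        refine Finset.sum_eq_zero fun c _ => Finset.sum_eq_zero fun d _ => ?_
        by_cases h : F c d = x
        · subst h; simp [hx]
        · simp [h]
    rw [Finset.sum_congr rfl fun x _ => step x, Finset.sum_comm]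
    refine Finset.sum_congr rfl fun c _ => ?_
    rw [Finset.sum_comm]
    simp only [Finset.sum_ite_eq, Finset.mem_univ, if_true]
    by_cases hc : c.IsCopy K
    · split_ifs with hec
      · obtain ⟨e', he', h⟩ := hF2 c hc e hec
        have h2 := h2e e' he'
        rw [finsum_copies K H ψ₂ h2z e'] at h2
        simp only [h]
        have h3 := congrArg (fun t => ψ₁ c * t) h2
        simpa only [Finset.mul_sum, mul_ite, mul_zero, mul_one] using h3
      · exact Finset.sum_eq_zero fun d _ => if_neg (hF3 c hc e hec d)
    · simp [h1z c hc]
end
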